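/- Let ρ and σ be density matrices on the tensor product ℂ^{d_A} ⊗ ℂ^{d_B} ⊗ ℂ^{d_C} and let p ∈ (0,1). Then |p·I(A:B|C)_ρ + (1−p)·I(A:B|C)_σ − I(A:B|C)_{pρ+(1−p)σ}| ≤ h₂(p), where h₂(p) = −p·ln p − (1−p)·ln(1−p). -/

import Mathlib

open Matrix

/-- The von Neumann entropy `H(ρ) = Σ_i η(λ_i)` of a matrix, where `λ_i` are
its eigenvalues and `η(x) = −x·ln x` (and `0` if the matrix is not
Hermitian). -/
noncomputable def vnEntropy {n : Type*} [Fintype n] [DecidableEq n]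
    (ρ : Matrix n n ℂ) : ℝ :=
  if h : ρ.IsHermitian then ∑ i, Real.negMulLog (h.eigenvalues i) else 0

/-- Partial trace over the middle factor `B`:
`ρ_AC((i,k),(j,l)) = Σ_m ρ((i,m,k),(j,m,l))`. -/
noncomputable def ptrB {dA dB dC : ℕ}
    (ρ : Matrix (Fin dA × Fin dB × Fin dC) (Fin dA × Fin dB × Fin dC) ℂ) :
    Matrix (Fin dA × Fin dC) (Fin dA × Fin dC) ℂ :=
  Matrix.of fun p q => ∑ m : Fin dB, ρ (p.1, m, p.2) (q.1, m, q.2)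

/-- Partial trace over the first factor `A`:
`ρ_BC((m,k),(m',l)) = Σ_i ρ((i,m,k),(i,m',l))`. -/
noncomputable def ptrA {dA dB dC : ℕ}
    (ρ : Matrix (Fin dA × Fin dB × Fin dC) (Fin dA × Fin dB × Fin dC) ℂ) :
    Matrix (Fin dB × Fin dC) (Fin dB × Fin dC) ℂ :=
  Matrix.of fun p q => ∑ i : Fin dA, ρ (i, p.1, p.2) (i, q.1, q.2)

/-- Partial trace over the first two factors `A` and `B`:
`ρ_C(k,l) = Σ_{i,m} ρ((i,m,k),(i,m,l))`. -/
noncomputable def ptrAB {dA dB dC : ℕ}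
    (ρ : Matrix (Fin dA × Fin dB × Fin dC) (Fin dA × Fin dB × Fin dC) ℂ) :
    Matrix (Fin dC) (Fin dC) ℂ :=
  Matrix.of fun k l => ∑ i : Fin dA, ∑ m : Fin dB, ρ (i, m, k) (i, m, l)

/-- The quantum conditional mutual information
`I(A:B|C)_ρ = H(ρ_AC) + H(ρ_BC) − H(ρ) − H(ρ_C)`. -/
noncomputable def qcmi {dA dB dC : ℕ}
    (ρ : Matrix (Fin dA × Fin dB × Fin dC) (Fin dA × Fin dB × Fin dC) ℂ) : ℝ :=
  vnEntropy (ptrB ρ) + vnEntropy (ptrA ρ) - vnEntropy ρ - vnEntropy (ptrAB ρ)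

/-!
For an ensemble of states `ρᵢ` with weights `pᵢ`, let `χ` be its Holevo information
`∑ pᵢ D(ρᵢ‖∑ pⱼ ρⱼ)`, where `D` is the relative entropy. The quantity to be bounded is
`(χ_ABC - χ_AC) - (χ_BC - χ_C)`, and both brackets lie between `0` and `∑ η(pᵢ) tr ρᵢ`: they are
nonnegative because `D` decreases under partial traces, `χ` is nonnegative by Klein's inequality
`tr ρ - tr τ ≤ D(ρ‖τ)`, and it is at most `∑ η(pᵢ) tr ρᵢ` because `c ρ ≤ τ` implies
`D(ρ‖τ) ≤ -log c · tr ρ`.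

For the monotonicity, write `D(ρ‖τ) = -∫ log dμ`, where `μ` is the spectral measure of the relative
modular operator `Δ : X ↦ τ X ρ⁻¹` in the state `ρ^(1/2)`. The integral `∫ (s + x)⁻¹ dμ(x)` is the
maximum over all matrices `Z` of an expression in the functionals `tr (ρ ·)` and `tr (τ ·)`, so it
can only decrease when `Z` is confined to the observables `1 ⊗ Z` of a subsystem; integrating over
`s > 0` gives the inequality for the logarithm.
-/

section TraceOfProduct

open scoped ComplexOrder MatrixOrder

variable {n : Type*} [Fintype n] {ρ : Matrix n n ℂ}

lemma trace_mul_nonneg {X : Matrix n n ℂ} (hρ : ρ.PosSemidef) (hX : X.PosSemidef) :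
    0 ≤ (ρ * X).trace := by
  classical
  obtain ⟨B, rfl⟩ := CStarAlgebra.nonneg_iff_eq_star_mul_self.1 hX.nonneg
  rw [← Matrix.mul_assoc, trace_mul_comm, ← Matrix.mul_assoc]
  exact (hρ.mul_mul_conjTranspose_same B).trace_nonneg

lemma trace_mul_self_mul_conjTranspose_re_nonneg (hρ : ρ.PosSemidef) (X : Matrix n n ℂ) :
    0 ≤ (ρ * (X * Xᴴ)).trace.re :=
  (Complex.le_def.1 (trace_mul_nonneg hρ (posSemidef_self_mul_conjTranspose X))).1

lemma trace_mul_conjTranspose_re (hρ : ρ.IsHermitian) (X : Matrix n n ℂ) :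
    (ρ * Xᴴ).trace.re = (ρ * X).trace.re := by
  rw [← Complex.conj_re, ← Complex.star_def, ← trace_conjTranspose, conjTranspose_mul,
    conjTranspose_conjTranspose, hρ.eq, trace_mul_comm]

lemma two_mul_trace_mul_re_le (hρ : ρ.PosSemidef) (t : ℝ) (X : Matrix n n ℂ) :
    2 * t * (ρ * X).trace.re ≤ (ρ * (X * Xᴴ)).trace.re + t ^ 2 * ρ.trace.re := by
  classical
  have hsq := trace_mul_self_mul_conjTranspose_re_nonneg hρ (X - t • 1)
  have hexpand : (ρ * ((X - t • 1) * (X - t • 1)ᴴ)).trace.re =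
      (ρ * (X * Xᴴ)).trace.re - t * (ρ * X).trace.re - t * (ρ * Xᴴ).trace.re +
        t ^ 2 * ρ.trace.re := by
    simp only [conjTranspose_sub, conjTranspose_smul, star_trivial, conjTranspose_one,
      Matrix.mul_sub, Matrix.sub_mul, smul_mul_assoc, mul_smul_comm, one_mul, mul_one, trace_sub,
      trace_smul, Complex.sub_re, Complex.smul_re, smul_eq_mul]
    ring
  rw [hexpand, trace_mul_conjTranspose_re hρ.1] at hsq
  linarith

end TraceOfProduct

section ScalarComparison

open Filter Topology

variable {ι κ : Type*} [Fintype ι] [Fintype κ]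

lemma hasDerivAt_sum_mul_log_add {w r : ι → ℝ} (hr : ∀ i, w i ≠ 0 → 0 < r i) {s : ℝ}
    (hs : 0 ≤ s) :
    HasDerivAt (fun t => ∑ i, w i * Real.log (t + r i)) (∑ i, w i / (s + r i)) s := by
  refine HasDerivAt.fun_sum fun i _ => ?_
  rcases eq_or_ne (w i) 0 with hw | hw
  · simpa [hw] using hasDerivAt_const s (0 : ℝ)
  · have hsr : s + r i ≠ 0 := (add_pos_of_nonneg_of_pos hs (hr i hw)).ne'
    simpa [div_eq_mul_inv] using
      (((hasDerivAt_id s).add_const (r i)).log hsr).const_mul (w i)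

lemma tendsto_sum_mul_log_add_sub_log (w r : ι → ℝ) :
    Tendsto (fun t => ∑ i, w i * Real.log (t + r i) - (∑ i, w i) * Real.log t) atTop (𝓝 0) := by
  have hlim : Tendsto (fun t => ∑ i, w i * (Real.log (t + r i) - Real.log t)) atTop
      (𝓝 (∑ i, w i * 0)) :=
    tendsto_finsetSum _ fun i _ => (Real.tendsto_log_comp_add_sub_log (r i)).const_mul (w i)
  simpa [mul_sub, Finset.sum_sub_distrib, Finset.sum_mul] using hlim

-- `log r` is the integral over `s > 0` of `1 / (1 + s) - 1 / (s + r)`.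
lemma sum_mul_log_le_of_sum_div_le {w r : ι → ℝ} {w' r' : κ → ℝ}
    (hr : ∀ i, w i ≠ 0 → 0 < r i) (hr' : ∀ k, w' k ≠ 0 → 0 < r' k)
    (hw : ∑ i, w i = ∑ k, w' k)
    (hle : ∀ s, 0 < s → ∑ i, w i / (s + r i) ≤ ∑ k, w' k / (s + r' k)) :
    ∑ k, w' k * Real.log (r' k) ≤ ∑ i, w i * Real.log (r i) := by
  let G : ℝ → ℝ := fun t =>
    ∑ k, w' k * Real.log (t + r' k) - ∑ i, w i * Real.log (t + r i)
  have hderiv (s : ℝ) (hs : 0 ≤ s) :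
      HasDerivAt G (∑ k, w' k / (s + r' k) - ∑ i, w i / (s + r i)) s :=
    (hasDerivAt_sum_mul_log_add hr' hs).sub (hasDerivAt_sum_mul_log_add hr hs)
  have hmono : MonotoneOn G (Set.Ici 0) := by
    refine monotoneOn_of_deriv_nonneg (convex_Ici 0)
      (fun s hs => (hderiv s hs).continuousAt.continuousWithinAt) ?_ ?_ <;>
      rw [interior_Ici] <;> intro s hs
    · exact (hderiv s (le_of_lt hs)).differentiableAt.differentiableWithinAt
    · rw [(hderiv s (le_of_lt hs)).deriv]
      exact sub_nonneg.2 (hle s hs)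
  have hlim : Tendsto G atTop (𝓝 0) := by
    simpa [G, hw] using
      (tendsto_sum_mul_log_add_sub_log w' r').sub (tendsto_sum_mul_log_add_sub_log w r)
  have hG : G 0 ≤ 0 := ge_of_tendsto hlim <| (eventually_ge_atTop 0).mono fun t ht =>
    hmono Set.self_mem_Ici ht ht
  simpa [G] using hG

end ScalarComparison

section Eigenbasis

variable {n : Type*} [Fintype n] [DecidableEq n] {ρ τ υ : Matrix n n ℂ}

/-- The matrix of `X` from an eigenbasis `v` of `τ` to an eigenbasis `u` of `ρ`: its entries are
`⟪uᵢ, X vⱼ⟫`. -/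
noncomputable def eigenbasisMatrix (hρ : ρ.IsHermitian) (hτ : τ.IsHermitian) (X : Matrix n n ℂ) :
    Matrix n n ℂ :=
  (hρ.eigenvectorUnitary : Matrix n n ℂ)ᴴ * X * (hτ.eigenvectorUnitary : Matrix n n ℂ)

lemma eigenbasisMatrix_mul (hρ : ρ.IsHermitian) (hτ : τ.IsHermitian) (hυ : υ.IsHermitian)
    (X Y : Matrix n n ℂ) :
    eigenbasisMatrix hρ hυ (X * Y) = eigenbasisMatrix hρ hτ X * eigenbasisMatrix hτ hυ Y := by
  have hV : (hτ.eigenvectorUnitary : Matrix n n ℂ) * (hτ.eigenvectorUnitary : Matrix n n ℂ)ᴴ = 1 :=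
    Unitary.coe_mul_star_self _
  have hXY : X * Y = X * ((hτ.eigenvectorUnitary : Matrix n n ℂ) *
      (hτ.eigenvectorUnitary : Matrix n n ℂ)ᴴ) * Y := by
    rw [hV, Matrix.mul_one]
  rw [hXY]
  simp only [eigenbasisMatrix, Matrix.mul_assoc]

lemma eigenbasisMatrix_conjTranspose (hρ : ρ.IsHermitian) (hτ : τ.IsHermitian)
    (X : Matrix n n ℂ) : eigenbasisMatrix hρ hτ Xᴴ = (eigenbasisMatrix hτ hρ X)ᴴ := by
  simp [eigenbasisMatrix, Matrix.mul_assoc]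

lemma eigenbasisMatrix_surjective (hρ : ρ.IsHermitian) (hτ : τ.IsHermitian) :
    Function.Surjective (eigenbasisMatrix hρ hτ) := fun Y => by
  have hU : (hρ.eigenvectorUnitary : Matrix n n ℂ)ᴴ * (hρ.eigenvectorUnitary : Matrix n n ℂ) = 1 :=
    Unitary.coe_star_mul_self _
  have hV : (hτ.eigenvectorUnitary : Matrix n n ℂ)ᴴ * (hτ.eigenvectorUnitary : Matrix n n ℂ) = 1 :=
    Unitary.coe_star_mul_self _
  refine ⟨(hρ.eigenvectorUnitary : Matrix n n ℂ) * Y *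
    (hτ.eigenvectorUnitary : Matrix n n ℂ)ᴴ, ?_⟩
  simp only [eigenbasisMatrix, Matrix.mul_assoc, hV, Matrix.mul_one]
  rw [← Matrix.mul_assoc, hU, Matrix.one_mul]

lemma eigenbasisMatrix_one (hρ : ρ.IsHermitian) : eigenbasisMatrix hρ hρ 1 = 1 := by
  rw [eigenbasisMatrix, Matrix.mul_one]
  exact Unitary.coe_star_mul_self _

lemma eigenbasisMatrix_self (hρ : ρ.IsHermitian) :
    eigenbasisMatrix hρ hρ ρ = diagonal fun i => (hρ.eigenvalues i : ℂ) := by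
  simpa [eigenbasisMatrix, Unitary.conjStarAlgAut_apply, star_eq_conjTranspose,
    Function.comp_def] using hρ.conjStarAlgAut_star_eigenvectorUnitary

lemma trace_cfc_mul (hρ : ρ.IsHermitian) (f : ℝ → ℝ) (X : Matrix n n ℂ) :
    (cfc f ρ * X).trace = ∑ i, (f (hρ.eigenvalues i) : ℂ) * eigenbasisMatrix hρ hρ X i i := by
  rw [hρ.cfc_eq, IsHermitian.cfc, Unitary.conjStarAlgAut_apply, Matrix.mul_assoc,
    Matrix.mul_assoc, trace_mul_comm, Matrix.mul_assoc]
  simp [eigenbasisMatrix, Matrix.trace, star_eq_conjTranspose]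

lemma trace_mul_eq_sum_eigenvalues_mul (hρ : ρ.IsHermitian) (X : Matrix n n ℂ) :
    (ρ * X).trace = ∑ i, (hρ.eigenvalues i : ℂ) * eigenbasisMatrix hρ hρ X i i := by
  simpa [cfc_id ℝ ρ hρ.isSelfAdjoint] using trace_cfc_mul hρ id X

lemma vnEntropy_eq_neg_trace (hρ : ρ.IsHermitian) :
    vnEntropy ρ = -(ρ * cfc Real.log ρ).trace.re := by
  rw [vnEntropy, dif_pos hρ, trace_mul_comm, trace_cfc_mul hρ, ← Complex.neg_re,
    ← Finset.sum_neg_distrib, Complex.re_sum, eigenbasisMatrix_self]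
  refine Finset.sum_congr rfl fun i _ => ?_
  simp [Real.negMulLog, mul_comm]

/-- The transition probabilities `|⟪uᵢ, vⱼ⟫|²` between an eigenbasis `u` of `ρ` and an eigenbasis
`v` of `τ`. -/
noncomputable def eigenbasisOverlap (hρ : ρ.IsHermitian) (hτ : τ.IsHermitian) : Matrix n n ℝ :=
  of fun i j => Complex.normSq (eigenbasisMatrix hρ hτ 1 i j)

lemma eigenbasisOverlap_nonneg (hρ : ρ.IsHermitian) (hτ : τ.IsHermitian) (i j : n) :
    0 ≤ eigenbasisOverlap hρ hτ i j :=
  Complex.normSq_nonneg _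

lemma eigenbasisOverlap_comm (hρ : ρ.IsHermitian) (hτ : τ.IsHermitian) (i j : n) :
    eigenbasisOverlap hρ hτ i j = eigenbasisOverlap hτ hρ j i := by
  rw [eigenbasisOverlap, of_apply, ← conjTranspose_one, eigenbasisMatrix_conjTranspose]
  simp [eigenbasisOverlap]

lemma eigenbasisMatrix_one_mul_swap (hρ : ρ.IsHermitian) (hτ : τ.IsHermitian) (i j : n) :
    eigenbasisMatrix hρ hτ 1 i j * eigenbasisMatrix hτ hρ 1 j i = eigenbasisOverlap hρ hτ i j := by
  rw [← conjTranspose_one, eigenbasisMatrix_conjTranspose hτ hρ]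
  simp [eigenbasisOverlap, Complex.mul_conj]

lemma sum_eigenbasisOverlap (hρ : ρ.IsHermitian) (hτ : τ.IsHermitian) (i : n) :
    ∑ j, eigenbasisOverlap hρ hτ i j = 1 := by
  have hsum : ∑ j, eigenbasisMatrix hρ hτ 1 i j * eigenbasisMatrix hτ hρ 1 j i = 1 := by
    rw [← Matrix.mul_apply, ← eigenbasisMatrix_mul, Matrix.one_mul, eigenbasisMatrix_one,
      one_apply_eq]
  simp only [eigenbasisMatrix_one_mul_swap] at hsum
  exact_mod_cast hsum

lemma sum_eigenbasisOverlap_left (hρ : ρ.IsHermitian) (hτ : τ.IsHermitian) (j : n) :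
    ∑ i, eigenbasisOverlap hρ hτ i j = 1 := by
  simpa only [eigenbasisOverlap_comm hτ hρ] using sum_eigenbasisOverlap hτ hρ j

lemma eigenbasisMatrix_apply_self (hρ : ρ.IsHermitian) (hτ : τ.IsHermitian) (j : n) :
    eigenbasisMatrix hτ hτ ρ j j = ∑ i, (eigenbasisOverlap hρ hτ i j * hρ.eigenvalues i : ℂ) := by
  have hdiag : eigenbasisMatrix hτ hτ ρ =
      eigenbasisMatrix hτ hρ 1 * diagonal (fun i => (hρ.eigenvalues i : ℂ)) *
        eigenbasisMatrix hρ hτ 1 := by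
    simp only [← eigenbasisMatrix_self hρ, ← eigenbasisMatrix_mul, Matrix.one_mul, Matrix.mul_one]
  rw [hdiag, Matrix.mul_apply]
  refine Finset.sum_congr rfl fun i _ => ?_
  rw [mul_diagonal, ← eigenbasisMatrix_one_mul_swap]
  ring

end Eigenbasis

section RelativeEntropy

open scoped ComplexOrder MatrixOrder

variable {n : Type*} [Fintype n] [DecidableEq n] {ρ τ : Matrix n n ℂ}

/-- The quantum relative entropy `D(ρ‖τ) = tr ρ (log ρ - log τ)`. As `Real.log 0 = 0`, it is
meaningful only if the support of `ρ` is contained in that of `τ`. For positive semidefinite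
matrices this amounts to a bound `c • ρ ≤ τ` with `0 < c`, the form in which it is assumed below. -/
noncomputable def vnRelEntropy (ρ τ : Matrix n n ℂ) : ℝ :=
  (ρ * (cfc Real.log ρ - cfc Real.log τ)).trace.re

/-- The weights of the spectral measure, in the state `ρ^(1/2)`, of the relative modular operator
`X ↦ τ X ρ⁻¹`; the eigenvalues are `relModularEigenvalue`. -/
noncomputable def relModularWeight (hρ : ρ.IsHermitian) (hτ : τ.IsHermitian) (x : n × n) : ℝ :=
  eigenbasisOverlap hρ hτ x.1 x.2 * hρ.eigenvalues x.1

/-- The eigenvalues `bⱼ / aᵢ` of the relative modular operator `X ↦ τ X ρ⁻¹`, where `aᵢ` and `bⱼ`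
are those of `ρ` and `τ`. The value `0` taken at `aᵢ = 0` is immaterial, as the weight vanishes. -/
noncomputable def relModularEigenvalue (hρ : ρ.IsHermitian) (hτ : τ.IsHermitian) (x : n × n) : ℝ :=
  hτ.eigenvalues x.2 / hρ.eigenvalues x.1

lemma sum_relModularWeight (hρ : ρ.IsHermitian) (hτ : τ.IsHermitian) :
    ∑ x, relModularWeight hρ hτ x = ρ.trace.re := by
  simp_rw [Fintype.sum_prod_type, relModularWeight, ← Finset.sum_mul, sum_eigenbasisOverlap,
    one_mul, hρ.trace_eq_sum_eigenvalues]
  simp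

lemma eigenbasisOverlap_mul_le_of_smul_le (hρ : ρ.PosSemidef) (hτ : τ.IsHermitian) {c : ℝ}
    (hc : 0 ≤ c) (h : c • ρ ≤ τ) (i j : n) :
    c * (eigenbasisOverlap hρ.1 hτ i j * hρ.1.eigenvalues i) ≤ hτ.eigenvalues j := by
  have hdiff : 0 ≤ (eigenbasisMatrix hτ hτ (τ - c • ρ) j j).re :=
    (Complex.le_def.1 ((le_iff.1 h).conjTranspose_mul_mul_same _).diag_nonneg).1
  have hentry : (eigenbasisMatrix hτ hτ (τ - c • ρ) j j).re = hτ.eigenvalues j -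
      c * ∑ k, eigenbasisOverlap hρ.1 hτ k j * hρ.1.eigenvalues k := by
    have hlinear : eigenbasisMatrix hτ hτ (τ - c • ρ) =
        eigenbasisMatrix hτ hτ τ - c • eigenbasisMatrix hτ hτ ρ := by
      simp [eigenbasisMatrix, Matrix.mul_sub, Matrix.sub_mul]
    rw [hlinear, eigenbasisMatrix_self, Matrix.sub_apply, Matrix.smul_apply,
      eigenbasisMatrix_apply_self hρ.1]
    simp
  have hle : eigenbasisOverlap hρ.1 hτ i j * hρ.1.eigenvalues i ≤
      ∑ k, eigenbasisOverlap hρ.1 hτ k j * hρ.1.eigenvalues k :=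
    Finset.single_le_sum (f := fun k => eigenbasisOverlap hρ.1 hτ k j * hρ.1.eigenvalues k)
      (fun k _ => mul_nonneg (eigenbasisOverlap_nonneg ..) (hρ.eigenvalues_nonneg k))
      (Finset.mem_univ i)
  linarith [mul_le_mul_of_nonneg_left hle hc]

lemma relModularEigenvalue_pos_of_smul_le (hρ : ρ.PosSemidef) (hτ : τ.IsHermitian) {c : ℝ}
    (hc : 0 < c) (h : c • ρ ≤ τ) {x : n × n} (hx : relModularWeight hρ.1 hτ x ≠ 0) :
    0 < relModularEigenvalue hρ.1 hτ x := by
  have ha : 0 < hρ.1.eigenvalues x.1 :=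
    (hρ.eigenvalues_nonneg x.1).lt_of_ne' (right_ne_zero_of_mul hx)
  have hw : 0 < relModularWeight hρ.1 hτ x :=
    (mul_nonneg (eigenbasisOverlap_nonneg ..) ha.le).lt_of_ne' hx
  have hb := eigenbasisOverlap_mul_le_of_smul_le hρ hτ hc.le h x.1 x.2
  exact div_pos ((mul_pos hc hw).trans_le hb) ha

lemma trace_mul_cfc_re (hρ : ρ.IsHermitian) (hτ : τ.IsHermitian) (f : ℝ → ℝ) :
    (ρ * cfc f τ).trace.re = ∑ x, relModularWeight hρ hτ x * f (hτ.eigenvalues x.2) := by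
  rw [trace_mul_comm, trace_cfc_mul hτ, Complex.re_sum, Fintype.sum_prod_type_right]
  refine Finset.sum_congr rfl fun j _ => ?_
  rw [eigenbasisMatrix_apply_self hρ, Complex.re_ofReal_mul, Complex.re_sum, mul_comm,
    Finset.sum_mul]
  simp [relModularWeight]

lemma trace_mul_cfc_self_re (hρ : ρ.IsHermitian) (hτ : τ.IsHermitian) (f : ℝ → ℝ) :
    (ρ * cfc f ρ).trace.re = ∑ x, relModularWeight hρ hτ x * f (hρ.eigenvalues x.1) := by
  simp_rw [Fintype.sum_prod_type, relModularWeight, mul_assoc, ← Finset.sum_mul,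
    sum_eigenbasisOverlap, one_mul]
  rw [trace_mul_comm, trace_cfc_mul hρ, eigenbasisMatrix_self, Complex.re_sum]
  simp [mul_comm]

lemma vnRelEntropy_eq_neg_sum (hρ : ρ.PosSemidef) (hτ : τ.IsHermitian) {c : ℝ} (hc : 0 < c)
    (h : c • ρ ≤ τ) :
    vnRelEntropy ρ τ =
      -∑ x, relModularWeight hρ.1 hτ x * Real.log (relModularEigenvalue hρ.1 hτ x) := by
  rw [vnRelEntropy, Matrix.mul_sub, trace_sub, Complex.sub_re, trace_mul_cfc_self_re hρ.1 hτ,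
    trace_mul_cfc_re hρ.1 hτ, ← Finset.sum_sub_distrib, ← Finset.sum_neg_distrib]
  refine Finset.sum_congr rfl fun x _ => ?_
  rcases eq_or_ne (relModularWeight hρ.1 hτ x) 0 with hx | hx
  · simp [hx]
  · have hr := (relModularEigenvalue_pos_of_smul_le hρ hτ hc h hx).ne'
    rw [relModularEigenvalue, div_ne_zero_iff] at hr
    rw [relModularEigenvalue, Real.log_div hr.1 hr.2]
    ring

lemma sum_relModularWeight_mul_eigenvalue_le (hρ : ρ.IsHermitian) (hτ : τ.PosSemidef) :
    ∑ x, relModularWeight hρ hτ.1 x * relModularEigenvalue hρ hτ.1 x ≤ τ.trace.re := by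
  calc ∑ x, relModularWeight hρ hτ.1 x * relModularEigenvalue hρ hτ.1 x
      ≤ ∑ x : n × n, eigenbasisOverlap hρ hτ.1 x.1 x.2 * hτ.1.eigenvalues x.2 := by
        refine Finset.sum_le_sum fun x _ => ?_
        rw [relModularWeight, relModularEigenvalue, mul_assoc]
        refine mul_le_mul_of_nonneg_left ?_ (eigenbasisOverlap_nonneg ..)
        rcases eq_or_ne (hρ.eigenvalues x.1) 0 with ha | ha
        · simpa [ha] using hτ.eigenvalues_nonneg x.2
        · rw [mul_div_cancel₀ _ ha]
    _ = τ.trace.re := by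
        simp_rw [Fintype.sum_prod_type_right, ← Finset.sum_mul, sum_eigenbasisOverlap_left,
          one_mul, hτ.1.trace_eq_sum_eigenvalues]
        simp

lemma trace_sub_trace_le_vnRelEntropy (hρ : ρ.PosSemidef) (hτ : τ.PosSemidef) {c : ℝ}
    (hc : 0 < c) (h : c • ρ ≤ τ) : ρ.trace.re - τ.trace.re ≤ vnRelEntropy ρ τ := by
  have hlog (x : n × n) :
      relModularWeight hρ.1 hτ.1 x * Real.log (relModularEigenvalue hρ.1 hτ.1 x) ≤
        relModularWeight hρ.1 hτ.1 x * relModularEigenvalue hρ.1 hτ.1 x -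
          relModularWeight hρ.1 hτ.1 x := by
    rcases eq_or_ne (relModularWeight hρ.1 hτ.1 x) 0 with hx | hx
    · simp [hx]
    · rw [← mul_sub_one]
      exact mul_le_mul_of_nonneg_left
        (Real.log_le_sub_one_of_pos (relModularEigenvalue_pos_of_smul_le hρ hτ.1 hc h hx))
        (mul_nonneg (eigenbasisOverlap_nonneg ..) (hρ.eigenvalues_nonneg _))
  have hsum := Finset.sum_le_sum fun x (_ : x ∈ Finset.univ) => hlog x
  rw [Finset.sum_sub_distrib, sum_relModularWeight] at hsum
  rw [vnRelEntropy_eq_neg_sum hρ hτ.1 hc h]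
  linarith [sum_relModularWeight_mul_eigenvalue_le hρ.1 hτ]

end RelativeEntropy

section ResolventFunctional

open scoped ComplexOrder MatrixOrder

variable {n : Type*} [Fintype n] {ρ τ : Matrix n n ℂ}

/-- The functional of `Z` whose maximum is the resolvent `⟪ρ^(1/2), (s + Δ)⁻¹ ρ^(1/2)⟫` of the
relative modular operator `Δ : X ↦ τ X ρ⁻¹`, for `s > 0`. It is the concave quadratic form
`2 re ⟪ρ^(1/2), K⟫ - ⟪K, (s + Δ) K⟫` written in terms of `K = Z ρ^(1/2)`. -/
noncomputable def resolventFunctional (s : ℝ) (ρ τ Z : Matrix n n ℂ) : ℝ :=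
  2 * (ρ * Z).trace.re - (τ * (Z * Zᴴ)).trace.re - s * (ρ * (Zᴴ * Z)).trace.re

lemma resolventFunctional_le_of_smul_le (hρ : ρ.PosSemidef) {c s : ℝ} (hc : 0 < c) (hs : 0 < s)
    (h : c • ρ ≤ τ) (Z : Matrix n n ℂ) :
    resolventFunctional s ρ τ Z ≤ ρ.trace.re / (s + c) := by
  have hτ : c * (ρ * (Z * Zᴴ)).trace.re ≤ (τ * (Z * Zᴴ)).trace.re := by
    simpa [Matrix.sub_mul] using trace_mul_self_mul_conjTranspose_re_nonneg (le_iff.1 h) Z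
  have hZ := mul_le_mul_of_nonneg_left (two_mul_trace_mul_re_le hρ (1 / (s + c)) Z) hc.le
  have hZ' := mul_le_mul_of_nonneg_left (two_mul_trace_mul_re_le hρ (1 / (s + c)) Zᴴ) hs.le
  rw [conjTranspose_conjTranspose, trace_mul_conjTranspose_re hρ.1] at hZ'
  have hlin : 2 * (ρ * Z).trace.re = c * (2 * (1 / (s + c)) * (ρ * Z).trace.re) +
      s * (2 * (1 / (s + c)) * (ρ * Z).trace.re) := by
    field_simp
    ring
  have hconst : ρ.trace.re / (s + c) = c * ((1 / (s + c)) ^ 2 * ρ.trace.re) +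
      s * ((1 / (s + c)) ^ 2 * ρ.trace.re) := by
    field_simp
    ring
  rw [resolventFunctional, hlin, hconst]
  linarith

variable [DecidableEq n]

lemma trace_mul_re_eq_sum_eigenbasis (hρ : ρ.IsHermitian) (hτ : τ.IsHermitian)
    (Z : Matrix n n ℂ) :
    (ρ * Z).trace.re = ∑ x : n × n, hρ.eigenvalues x.1 *
      (eigenbasisMatrix hρ hτ 1 x.1 x.2 * eigenbasisMatrix hτ hρ Z x.2 x.1).re := by
  have hZ : eigenbasisMatrix hρ hρ Z = eigenbasisMatrix hρ hτ 1 * eigenbasisMatrix hτ hρ Z := by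
    rw [← eigenbasisMatrix_mul, Matrix.one_mul]
  rw [trace_mul_eq_sum_eigenvalues_mul hρ, hZ, Fintype.sum_prod_type]
  simp only [Matrix.mul_apply, Complex.re_sum, Complex.re_ofReal_mul, Finset.mul_sum]

lemma trace_mul_self_mul_conjTranspose_re_eq_sum_eigenbasis (hρ : ρ.IsHermitian)
    (hτ : τ.IsHermitian) (X : Matrix n n ℂ) :
    (ρ * (X * Xᴴ)).trace.re = ∑ x : n × n, hρ.eigenvalues x.1 *
      Complex.normSq (eigenbasisMatrix hρ hτ X x.1 x.2) := by
  rw [trace_mul_eq_sum_eigenvalues_mul hρ, eigenbasisMatrix_mul hρ hτ hρ,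
    eigenbasisMatrix_conjTranspose, Fintype.sum_prod_type]
  simp [Matrix.mul_apply, Finset.mul_sum, Complex.mul_conj]

lemma resolventFunctional_eq_sum (hρ : ρ.IsHermitian) (hτ : τ.IsHermitian) (s : ℝ)
    (Z : Matrix n n ℂ) :
    resolventFunctional s ρ τ Z = ∑ x : n × n,
      (2 * (hρ.eigenvalues x.1 *
          (eigenbasisMatrix hρ hτ 1 x.1 x.2 * eigenbasisMatrix hτ hρ Z x.2 x.1).re) -
        (hτ.eigenvalues x.2 + s * hρ.eigenvalues x.1) *
          Complex.normSq (eigenbasisMatrix hτ hρ Z x.2 x.1)) := by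
  have hττ := trace_mul_self_mul_conjTranspose_re_eq_sum_eigenbasis hτ hρ Z
  have hρρ := trace_mul_self_mul_conjTranspose_re_eq_sum_eigenbasis hρ hτ Zᴴ
  rw [Fintype.sum_prod_type_right] at hττ
  simp only [conjTranspose_conjTranspose, eigenbasisMatrix_conjTranspose hρ hτ,
    conjTranspose_apply, Complex.star_def, Complex.normSq_conj] at hρρ
  rw [resolventFunctional, trace_mul_re_eq_sum_eigenbasis hρ hτ, hττ, hρρ,
    ← Fintype.sum_prod_type (f := fun x : n × n =>
      hτ.eigenvalues x.2 * Complex.normSq (eigenbasisMatrix hτ hρ Z x.2 x.1)),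
    Finset.mul_sum, Finset.mul_sum, ← Finset.sum_sub_distrib, ← Finset.sum_sub_distrib]
  exact Finset.sum_congr rfl fun x _ => by ring

lemma isGreatest_two_mul_re_sub_mul_normSq (a : ℝ) {d : ℝ} (hd : 0 < d) (w : ℂ) :
    IsGreatest (Set.range fun y : ℂ => 2 * (a * (w * y).re) - d * Complex.normSq y)
      (Complex.normSq w * a ^ 2 / d) := by
  refine ⟨⟨(a / d : ℝ) * (starRingEnd ℂ) w, ?_⟩, ?_⟩
  · have hre : (w * ((a / d : ℝ) * (starRingEnd ℂ) w)).re = a / d * Complex.normSq w := by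
      rw [mul_left_comm, Complex.mul_conj, ← Complex.ofReal_mul, Complex.ofReal_re]
    simp only [hre, Complex.normSq_mul, Complex.normSq_ofReal, Complex.normSq_conj]
    field_simp
    ring
  · rintro _ ⟨y, rfl⟩
    simp only [Complex.normSq_apply, Complex.mul_re]
    rw [le_div_iff₀ hd]
    nlinarith [sq_nonneg (a * w.re - d * y.re), sq_nonneg (a * w.im + d * y.im)]

lemma isGreatest_resolventFunctional_coord {a b s : ℝ} (ha : 0 ≤ a) (hb : 0 ≤ b) (hs : 0 < s)
    (w : ℂ) :
    IsGreatest (Set.range fun y : ℂ => 2 * (a * (w * y).re) - (b + s * a) * Complex.normSq y)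
      (Complex.normSq w * a / (s + b / a)) := by
  rcases ha.eq_or_lt with rfl | ha
  · refine ⟨⟨0, by simp⟩, ?_⟩
    rintro _ ⟨y, rfl⟩
    simpa using mul_nonneg hb (Complex.normSq_nonneg y)
  · have hvalue : Complex.normSq w * a / (s + b / a) =
        Complex.normSq w * a ^ 2 / (b + s * a) := by
      field_simp
      ring
    rw [hvalue]
    exact isGreatest_two_mul_re_sub_mul_normSq a (by positivity) w

lemma isGreatest_resolventFunctional (hρ : ρ.PosSemidef) (hτ : τ.PosSemidef) {s : ℝ}
    (hs : 0 < s) :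
    IsGreatest (Set.range (resolventFunctional s ρ τ))
      (∑ x, relModularWeight hρ.1 hτ.1 x / (s + relModularEigenvalue hρ.1 hτ.1 x)) := by
  have hcoord (x : n × n) := isGreatest_resolventFunctional_coord
    (hρ.eigenvalues_nonneg x.1) (hτ.eigenvalues_nonneg x.2) hs
    (eigenbasisMatrix hρ.1 hτ.1 1 x.1 x.2)
  refine ⟨?_, ?_⟩
  · choose y hy using fun x => (hcoord x).1
    obtain ⟨Z, hZ⟩ := eigenbasisMatrix_surjective hτ.1 hρ.1 (of fun j i => y (i, j))
    refine ⟨Z, ?_⟩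
    rw [resolventFunctional_eq_sum hρ.1 hτ.1, hZ]
    exact Finset.sum_congr rfl fun x _ => hy x
  · rintro _ ⟨Z, rfl⟩
    rw [resolventFunctional_eq_sum hρ.1 hτ.1]
    exact Finset.sum_le_sum fun x _ => (hcoord x).2 ⟨_, rfl⟩

theorem vnRelEntropy_le_of_smul_le (hρ : ρ.PosSemidef) (hτ : τ.PosSemidef) {c : ℝ} (hc : 0 < c)
    (h : c • ρ ≤ τ) : vnRelEntropy ρ τ ≤ -Real.log c * ρ.trace.re := by
  have hlog := sum_mul_log_le_of_sum_div_le (w := relModularWeight hρ.1 hτ.1)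
    (r := relModularEigenvalue hρ.1 hτ.1) (w' := fun _ : Unit => ρ.trace.re) (r' := fun _ => c)
    (fun _ => relModularEigenvalue_pos_of_smul_le hρ hτ.1 hc h) (fun _ _ => hc)
    (by simp [sum_relModularWeight]) fun s hs => by
      obtain ⟨Z, hZ⟩ := (isGreatest_resolventFunctional hρ hτ hs).1
      simpa [← hZ] using resolventFunctional_le_of_smul_le hρ hc hs h Z
  rw [vnRelEntropy_eq_neg_sum hρ hτ.1 hc h]
  simp only [Finset.univ_unique, Finset.sum_singleton] at hlog
  linarith

end ResolventFunctional

section Restriction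

open scoped ComplexOrder MatrixOrder

variable {m n : Type*} [Fintype m] [Fintype n] [DecidableEq m] [DecidableEq n]
  {α : Matrix m m ℂ →⋆ₐ[ℂ] Matrix n n ℂ} {ρ τ : Matrix n n ℂ} {ρ' τ' : Matrix m m ℂ}

/-- `ρ'` is the density matrix of the functional `tr (ρ ·)` restricted along `α`. For
`α : Z ↦ 1 ⊗ Z` this makes `ρ'` a partial trace of `ρ`. -/
def IsRestriction (α : Matrix m m ℂ →⋆ₐ[ℂ] Matrix n n ℂ) (ρ : Matrix n n ℂ)
    (ρ' : Matrix m m ℂ) : Prop :=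
  ∀ Z, (ρ' * Z).trace = (ρ * α Z).trace

namespace IsRestriction

lemma unique (h : IsRestriction α ρ ρ') (h' : IsRestriction α ρ τ') : ρ' = τ' :=
  ext_iff_trace_mul_right.2 fun Z => (h Z).trans (h' Z).symm

lemma trace_eq (h : IsRestriction α ρ ρ') : ρ'.trace = ρ.trace := by
  simpa using h 1

lemma sub (hρ : IsRestriction α ρ ρ') (hτ : IsRestriction α τ τ') :
    IsRestriction α (ρ - τ) (ρ' - τ') := fun Z => by
  simp only [Matrix.sub_mul, trace_sub, hρ Z, hτ Z]

lemma smul (c : ℝ) (h : IsRestriction α ρ ρ') : IsRestriction α (c • ρ) (c • ρ') := fun Z => by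
  simp only [Matrix.smul_mul, trace_smul, h Z]

lemma sum {ι : Type*} (s : Finset ι) {ρ : ι → Matrix n n ℂ} {ρ' : ι → Matrix m m ℂ}
    (h : ∀ i ∈ s, IsRestriction α (ρ i) (ρ' i)) :
    IsRestriction α (∑ i ∈ s, ρ i) (∑ i ∈ s, ρ' i) := fun Z => by
  simp only [Matrix.sum_mul, trace_sum]
  exact Finset.sum_congr rfl fun i hi => h i hi Z

lemma isHermitian (h : IsRestriction α ρ ρ') (hρ : ρ.IsHermitian) : ρ'.IsHermitian := by
  refine ext_iff_trace_mul_right.2 fun Z => ?_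
  have hadjoint := congrArg star (h Zᴴ)
  rw [← star_eq_conjTranspose Z, map_star, star_eq_conjTranspose, star_eq_conjTranspose,
    ← trace_conjTranspose, ← trace_conjTranspose] at hadjoint
  simpa [hρ.eq, h Z, trace_mul_comm Z, trace_mul_comm (α Z)] using hadjoint

lemma posSemidef (h : IsRestriction α ρ ρ') (hρ : ρ.PosSemidef) : ρ'.PosSemidef := by
  refine .of_dotProduct_mulVec_nonneg (h.isHermitian hρ.1) fun x => ?_
  have hx : 0 ≤ α (vecMulVec x (star x)) :=
    map_nonneg α (posSemidef_vecMulVec_self_star x).nonneg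
  rw [dotProduct_comm, ← trace_vecMulVec, ← mul_vecMulVec, h]
  exact trace_mul_nonneg hρ (nonneg_iff_posSemidef.1 hx)

lemma smul_le (hρ : IsRestriction α ρ ρ') (hτ : IsRestriction α τ τ') {c : ℝ} (h : c • ρ ≤ τ) :
    c • ρ' ≤ τ' :=
  le_iff.2 <| (hτ.sub (hρ.smul c)).posSemidef <| le_iff.1 h

lemma resolventFunctional_eq (hρ : IsRestriction α ρ ρ') (hτ : IsRestriction α τ τ') (s : ℝ)
    (Z : Matrix m m ℂ) : resolventFunctional s ρ' τ' Z = resolventFunctional s ρ τ (α Z) := by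
  simp only [resolventFunctional, ← star_eq_conjTranspose, hρ _, hτ _, map_mul, map_star]

theorem vnRelEntropy_le (hρρ' : IsRestriction α ρ ρ') (hττ' : IsRestriction α τ τ')
    (hρ : ρ.PosSemidef) (hτ : τ.PosSemidef) {c : ℝ} (hc : 0 < c) (h : c • ρ ≤ τ) :
    vnRelEntropy ρ' τ' ≤ vnRelEntropy ρ τ := by
  have hρ' := hρρ'.posSemidef hρ
  have hτ' := hττ'.posSemidef hτ
  have h' := hρρ'.smul_le hττ' h
  rw [vnRelEntropy_eq_neg_sum hρ hτ.1 hc h, vnRelEntropy_eq_neg_sum hρ' hτ'.1 hc h',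
    neg_le_neg_iff]
  refine sum_mul_log_le_of_sum_div_le
    (fun _ => relModularEigenvalue_pos_of_smul_le hρ' hτ'.1 hc h')
    (fun _ => relModularEigenvalue_pos_of_smul_le hρ hτ.1 hc h)
    (by simp only [sum_relModularWeight, hρρ'.trace_eq]) fun s hs => ?_
  obtain ⟨Z, hZ⟩ := (isGreatest_resolventFunctional hρ' hτ' hs).1
  rw [← hZ, hρρ'.resolventFunctional_eq hττ']
  exact (isGreatest_resolventFunctional hρ hτ hs).2 ⟨α Z, rfl⟩

end IsRestriction

end Restriction

section HolevoInfo

open scoped ComplexOrder MatrixOrder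

variable {ι m n : Type*} [Fintype ι] {p : ι → ℝ} {ρ : ι → Matrix n n ℂ}

lemma isHermitian_sum_smul (hρ : ∀ i, (ρ i).IsHermitian) (p : ι → ℝ) :
    (∑ i, p i • ρ i).IsHermitian := by
  simp [IsHermitian, conjTranspose_sum, (hρ _).eq]

lemma posSemidef_sum_smul (hρ : ∀ i, (ρ i).PosSemidef) (hp : ∀ i, 0 ≤ p i) :
    (∑ i, p i • ρ i).PosSemidef :=
  posSemidef_sum _ fun i _ => (hρ i).smul (hp i)

lemma smul_le_sum_smul (hρ : ∀ i, (ρ i).PosSemidef) (hp : ∀ i, 0 ≤ p i) (i : ι) :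
    p i • ρ i ≤ ∑ j, p j • ρ j :=
  Finset.single_le_sum (f := fun j => p j • ρ j)
    (fun j _ => ((hρ j).smul (hp j)).nonneg) (Finset.mem_univ i)

variable [Fintype m] [Fintype n] [DecidableEq m] [DecidableEq n]

/-- The Holevo information `χ = H(∑ pᵢ ρᵢ) - ∑ pᵢ H(ρᵢ)` of the ensemble of the matrices `ρᵢ`
taken with weights `pᵢ`. -/
noncomputable def holevoInfo (p : ι → ℝ) (ρ : ι → Matrix n n ℂ) : ℝ :=
  vnEntropy (∑ i, p i • ρ i) - ∑ i, p i * vnEntropy (ρ i)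

lemma holevoInfo_eq_sum_vnRelEntropy (hρ : ∀ i, (ρ i).IsHermitian) :
    holevoInfo p ρ = ∑ i, p i * vnRelEntropy (ρ i) (∑ j, p j • ρ j) := by
  simp only [holevoInfo, vnEntropy_eq_neg_trace (isHermitian_sum_smul hρ p),
    vnEntropy_eq_neg_trace (hρ _), vnRelEntropy, trace_sub, Complex.sub_re,
    mul_sub, Finset.sum_sub_distrib]
  rw [Matrix.sum_mul]
  simp only [smul_mul_assoc, trace_sum, trace_smul, Complex.re_sum, Complex.smul_re, smul_eq_mul,
    mul_neg, Finset.sum_neg_distrib]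
  ring

lemma holevoInfo_nonneg (hρ : ∀ i, (ρ i).PosSemidef) (hp : ∀ i, 0 ≤ p i) (hp_sum : ∑ i, p i = 1) :
    0 ≤ holevoInfo p ρ := by
  have hklein (i : ι) : p i * ((ρ i).trace.re - (∑ j, p j • ρ j).trace.re) ≤
      p i * vnRelEntropy (ρ i) (∑ j, p j • ρ j) := by
    rcases (hp i).eq_or_lt with hi | hi
    · simp [← hi]
    · exact mul_le_mul_of_nonneg_left (trace_sub_trace_le_vnRelEntropy (hρ i)
        (posSemidef_sum_smul hρ hp) hi (smul_le_sum_smul hρ hp i)) hi.le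
  calc 0 = ∑ i, p i * ((ρ i).trace.re - (∑ j, p j • ρ j).trace.re) := by
        simp [mul_sub, ← Finset.sum_mul, hp_sum, trace_sum]
    _ ≤ ∑ i, p i * vnRelEntropy (ρ i) (∑ j, p j • ρ j) :=
        Finset.sum_le_sum fun i _ => hklein i
    _ = holevoInfo p ρ := (holevoInfo_eq_sum_vnRelEntropy fun i => (hρ i).1).symm

lemma holevoInfo_le (hρ : ∀ i, (ρ i).PosSemidef) (hp : ∀ i, 0 ≤ p i) :
    holevoInfo p ρ ≤ ∑ i, Real.negMulLog (p i) * (ρ i).trace.re := by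
  rw [holevoInfo_eq_sum_vnRelEntropy fun i => (hρ i).1]
  refine Finset.sum_le_sum fun i _ => ?_
  rcases (hp i).eq_or_lt with hi | hi
  · simp [← hi]
  · have hle := vnRelEntropy_le_of_smul_le (hρ i) (posSemidef_sum_smul hρ hp) hi
      (smul_le_sum_smul hρ hp i)
    simpa [Real.negMulLog, mul_assoc] using mul_le_mul_of_nonneg_left hle hi.le

lemma IsRestriction.holevoInfo_le {α : Matrix m m ℂ →⋆ₐ[ℂ] Matrix n n ℂ}
    {ρ' : ι → Matrix m m ℂ} (h : ∀ i, IsRestriction α (ρ i) (ρ' i))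
    (hρ : ∀ i, (ρ i).PosSemidef) (hp : ∀ i, 0 ≤ p i) : holevoInfo p ρ' ≤ holevoInfo p ρ := by
  rw [holevoInfo_eq_sum_vnRelEntropy fun i => (hρ i).1,
    holevoInfo_eq_sum_vnRelEntropy fun i => (h i).isHermitian (hρ i).1]
  refine Finset.sum_le_sum fun i _ => ?_
  rcases (hp i).eq_or_lt with hi | hi
  · simp [← hi]
  · exact mul_le_mul_of_nonneg_left ((h i).vnRelEntropy_le
      (sum _ fun j _ => (h j).smul (p j)) (hρ i) (posSemidef_sum_smul hρ hp) hi
      (smul_le_sum_smul hρ hp i)) hi.le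

end HolevoInfo

section PartialTrace

open scoped Kronecker

variable {k m n : Type*} [Fintype k] [Fintype m] [Fintype n] [DecidableEq k] [DecidableEq m]
  [DecidableEq n]

/-- The embedding `Z ↦ 1 ⊗ Z` of the observables on the second factor of a tensor product whose
basis is indexed by `n` through `e`. -/
def ampliation (e : k × m ≃ n) : Matrix m m ℂ →⋆ₐ[ℂ] Matrix n n ℂ where
  toFun Z := reindex e e ((1 : Matrix k k ℂ) ⊗ₖ Z)
  map_one' := by simp
  map_mul' X Y := by
    simp only [reindex_apply, submatrix_mul_equiv, ← mul_kronecker_mul, Matrix.one_mul]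
  map_zero' := by simp
  map_add' X Y := by simp [kronecker_add, submatrix_add]
  commutes' c := by simp [Algebra.algebraMap_eq_smul_one, kronecker_smul, submatrix_smul]
  map_star' X := by
    simp [star_eq_conjTranspose, conjTranspose_submatrix, conjTranspose_kronecker]

lemma isRestriction_ampliation (e : k × m ≃ n) (ρ : Matrix n n ℂ) :
    IsRestriction (ampliation e) ρ (of fun x y => ∑ i, ρ (e (i, x)) (e (i, y))) := fun Z => by
  have hρ : (ρ * ampliation e Z).trace = (ρ.submatrix e e * ((1 : Matrix k k ℂ) ⊗ₖ Z)).trace := by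
    simp only [Matrix.trace, diag_apply, Matrix.mul_apply, ← e.sum_comp, submatrix_apply]
    simp [ampliation]
  rw [hρ]
  simp only [Matrix.trace, diag_apply, Matrix.mul_apply, of_apply, Fintype.sum_prod_type,
    submatrix_apply, kroneckerMap_apply, one_apply, ite_mul, one_mul, zero_mul, mul_ite, mul_zero,
    Finset.sum_ite_irrel, Finset.sum_const_zero, Finset.sum_ite_eq', Finset.mem_univ, if_true,
    Finset.sum_mul]
  exact (Finset.sum_congr rfl fun x _ => Finset.sum_comm).trans Finset.sum_comm

variable {dA dB dC : ℕ}

/-- The relabelling of the basis which puts the factor `B` first. -/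
def middleFirst : Fin dB × Fin dA × Fin dC ≃ Fin dA × Fin dB × Fin dC where
  toFun x := (x.2.1, x.1, x.2.2)
  invFun x := (x.2.1, x.1, x.2.2)

variable (ρ : Matrix (Fin dA × Fin dB × Fin dC) (Fin dA × Fin dB × Fin dC) ℂ)

lemma isRestriction_ptrA : IsRestriction (ampliation (Equiv.refl _)) ρ (ptrA ρ) :=
  isRestriction_ampliation (Equiv.refl _) ρ

lemma isRestriction_ptrB : IsRestriction (ampliation middleFirst) ρ (ptrB ρ) :=
  isRestriction_ampliation middleFirst ρ

lemma isRestriction_ptrA_ptrAB :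
    IsRestriction (ampliation (Equiv.refl _)) (ptrA ρ) (ptrAB ρ) := by
  have hAB : ptrAB ρ = of fun x y => ∑ j, ptrA ρ (j, x) (j, y) := by
    ext x y
    rw [ptrAB, of_apply, Finset.sum_comm]
    rfl
  rw [hAB]
  exact isRestriction_ampliation (Equiv.refl _) (ptrA ρ)

end PartialTrace

section ConditionalMutualInformation

open scoped ComplexOrder

variable {dA dB dC : ℕ} {ι : Type*} [Fintype ι]
  {ρ : ι → Matrix (Fin dA × Fin dB × Fin dC) (Fin dA × Fin dB × Fin dC) ℂ}

lemma ptrA_sum_smul (p : ι → ℝ) : ptrA (∑ i, p i • ρ i) = ∑ i, p i • ptrA (ρ i) :=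
  (isRestriction_ptrA _).unique (.sum _ fun i _ => (isRestriction_ptrA (ρ i)).smul (p i))

lemma ptrB_sum_smul (p : ι → ℝ) : ptrB (∑ i, p i • ρ i) = ∑ i, p i • ptrB (ρ i) :=
  (isRestriction_ptrB _).unique (.sum _ fun i _ => (isRestriction_ptrB (ρ i)).smul (p i))

lemma ptrAB_sum_smul (p : ι → ℝ) : ptrAB (∑ i, p i • ρ i) = ∑ i, p i • ptrAB (ρ i) := by
  refine (isRestriction_ptrA_ptrAB _).unique ?_
  rw [ptrA_sum_smul]
  exact .sum _ fun i _ => (isRestriction_ptrA_ptrAB (ρ i)).smul (p i)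

lemma sum_mul_qcmi_sub_qcmi_sum_smul (p : ι → ℝ) :
    ∑ i, p i * qcmi (ρ i) - qcmi (∑ i, p i • ρ i) =
      (holevoInfo p ρ - holevoInfo p fun i => ptrB (ρ i)) -
        (holevoInfo p (fun i => ptrA (ρ i)) - holevoInfo p fun i => ptrAB (ρ i)) := by
  simp only [qcmi, holevoInfo, ptrA_sum_smul, ptrB_sum_smul, ptrAB_sum_smul, mul_sub, mul_add,
    Finset.sum_sub_distrib, Finset.sum_add_distrib]
  ring

theorem abs_qcmi_convex_combination_le_general (hρ : ∀ i, (ρ i).PosSemidef) {p : ι → ℝ}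
    (hp : ∀ i, 0 ≤ p i) (hp_sum : ∑ i, p i = 1) :
    |∑ i, p i * qcmi (ρ i) - qcmi (∑ i, p i • ρ i)| ≤
      ∑ i, Real.negMulLog (p i) * (ρ i).trace.re := by
  have hA (i : ι) := isRestriction_ptrA (ρ i)
  have hB (i : ι) := isRestriction_ptrB (ρ i)
  have hAB (i : ι) := isRestriction_ptrA_ptrAB (ρ i)
  have hρA (i : ι) := (hA i).posSemidef (hρ i)
  have hρB (i : ι) := (hB i).posSemidef (hρ i)
  have hρAB (i : ι) := (hAB i).posSemidef (hρA i)
  have hmono := IsRestriction.holevoInfo_le hB hρ hp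
  have hmonoA := IsRestriction.holevoInfo_le hAB hρA hp
  have hle := holevoInfo_le hρ hp
  have hleA := holevoInfo_le hρA hp
  simp only [(hA _).trace_eq] at hleA
  rw [sum_mul_qcmi_sub_qcmi_sum_smul, abs_le]
  constructor <;> linarith [holevoInfo_nonneg hρB hp hp_sum, holevoInfo_nonneg hρAB hp hp_sum]

end ConditionalMutualInformation

open scoped ComplexOrder in
/-- Local near-affinity of the quantum conditional mutual information:
`|p·I(A:B|C)_ρ + (1−p)·I(A:B|C)_σ − I(A:B|C)_{pρ+(1−p)σ}| ≤ h₂(p)`. -/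
theorem abs_qcmi_convex_combination_le {dA dB dC : ℕ}
    (ρ σ : Matrix (Fin dA × Fin dB × Fin dC) (Fin dA × Fin dB × Fin dC) ℂ)
    (hρ : ρ.PosSemidef) (hρ_tr : ρ.trace = 1)
    (hσ : σ.PosSemidef) (hσ_tr : σ.trace = 1)
    (p : ℝ) (hp0 : 0 < p) (hp1 : p < 1) :
    |p * qcmi ρ + (1 - p) * qcmi σ - qcmi (p • ρ + (1 - p) • σ)| ≤
      -(p * Real.log p) - (1 - p) * Real.log (1 - p) := by
  have h := abs_qcmi_convex_combination_le_general (ρ := ![ρ, σ]) (p := ![p, 1 - p])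
    (by simp [Fin.forall_fin_two, hρ, hσ]) (by simp [Fin.forall_fin_two, hp0.le, hp1.le]) (by simp)
  simpa only [Fin.sum_univ_two, cons_val_zero, cons_val_one, hρ_tr, hσ_tr, Complex.one_re, mul_one,
    Real.negMulLog, neg_mul, ← sub_eq_add_neg] using h
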